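/- arXiv:2212.13188 — 5 statements merged into one kernel-verified Lean document; each statement's English description precedes it below -/
import Mathlib

section
/- If (ǎ,p̌,V̌) is optimal for problem P2, then (p̌,V̌) solves the system p = y(p,V) ∧ l and V = Ǧ₊(p,V); moreover p̌ ≤ p̲, where p̲ is the minimal fixpoint of F_𝟘 in [0,l] (𝟘 = (0,…,0)); and if yʲ(p̌,V̌) ≠ lʲ for every j, then p̌ = p̲. -/
open Matrix

/-!
The admissible set of P2 is closed under componentwise minima, so an optimum, which is minimal
because the objective is strictly increasing, is the least admissible triple. The map
`(a, p, V) ↦ (1_{y > l}, y ∧ l, (x - l - κ (1 - a))⁺)` sends admissible triples to smaller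
admissible ones, so it fixes the optimum; as `x - l ≤ κ` there, this is exactly the clearing system.
Conversely a solution `q` of `q = y(q, W) ∧ l`, `W = G₊(q, W)` gives the admissible triple
`(1_{q = l}, q, W)`, whence `p̌ ≤ q`. When `y ≠ l` everywhere the indicators of `p̌ = l` and
`y > l` agree, so `p̌` is itself a fixpoint of `F_𝟘`.
-/

section Matrix

variable {m n R : Type*} [Fintype n] [CommRing R] [PartialOrder R] [IsOrderedRing R]

theorem mulVec_mono {A : Matrix m n R} (hA : ∀ i j, 0 ≤ A i j) {v w : n → R} (h : v ≤ w) :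
    A *ᵥ v ≤ A *ᵥ w :=
  fun i => dotProduct_le_dotProduct_of_nonneg_left h (hA i)

theorem mulVec_nonneg {A : Matrix m n R} (hA : ∀ i j, 0 ≤ A i j) {v : n → R} (h : 0 ≤ v) :
    0 ≤ A *ᵥ v :=
  fun i => dotProduct_nonneg_of_nonneg (hA i) h

theorem le_inv_mulVec [DecidableEq n] {A : Matrix n n R} (hunit : IsUnit A)
    (hInv : ∀ i j, 0 ≤ A⁻¹ i j) {v w : n → R} (h : A *ᵥ v ≤ w) : v ≤ A⁻¹ *ᵥ w := by
  have hle := mulVec_mono hInv h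
  rwa [mulVec_mulVec, nonsing_inv_mul _ ((isUnit_iff_isUnit_det A).1 hunit), one_mulVec] at hle

end Matrix

theorem strictMono_weightedSum {ι R : Type*} [Fintype ι] [CommRing R] [LinearOrder R]
    [IsStrictOrderedRing R] {c₁ c₂ c₃ : ι → R} (h₁ : ∀ i, 0 < c₁ i)
    (h₂ : ∀ i, 0 < c₂ i) (h₃ : ∀ i, 0 < c₃ i) : StrictMono fun t : (ι → R) × (ι → R) × (ι → R) =>
      ∑ i, (c₁ i * t.1 i + c₂ i * t.2.1 i + c₃ i * t.2.2 i) := by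
  rintro s t ⟨⟨hle₁, hle₂, hle₃⟩, hne⟩
  have hmul₁ (i) := mul_le_mul_of_nonneg_left (hle₁ i) (h₁ i).le
  have hmul₂ (i) := mul_le_mul_of_nonneg_left (hle₂ i) (h₂ i).le
  have hmul₃ (i) := mul_le_mul_of_nonneg_left (hle₃ i) (h₃ i).le
  refine Fintype.sum_strictMono (lt_of_le_not_ge (fun i => ?_) fun hge => hne ⟨?_, ?_, ?_⟩)
  · exact add_le_add (add_le_add (hmul₁ i) (hmul₂ i)) (hmul₃ i)
  · exact fun i => le_of_mul_le_mul_left (by linarith [hge i, hmul₂ i, hmul₃ i]) (h₁ i)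
  · exact fun i => le_of_mul_le_mul_left (by linarith [hge i, hmul₁ i, hmul₃ i]) (h₂ i)
  · exact fun i => le_of_mul_le_mul_left (by linarith [hge i, hmul₁ i, hmul₂ i]) (h₃ i)

section Clearing

variable {ι R : Type*} [CommRing R] [LinearOrder R]

/-- The feasible set of problem P2 for arbitrary asset maps `x` and `y`. -/
def p2Admissible (x y : (ι → R) × (ι → R) → ι → R) (l : ι → R) (κ κ₁ : R) :
    Set ((ι → R) × (ι → R) × (ι → R)) :=
  {(a, p, V) | (∀ i, a i = 0 ∨ a i = 1) ∧ p ∈ Set.Icc 0 l ∧ 0 ≤ V ∧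
    (∀ i, y (p, V) i - κ₁ * a i ≤ p i) ∧ (∀ i, a i * l i ≤ p i) ∧
    (∀ i, y (p, V) i ≤ (1 - a i) * l i + κ₁ * a i) ∧
    (∀ i, x (p, V) i - l i - κ * (1 - a i) ≤ V i)}

/-- The equity map `G₊(u, V)`. -/
def equity (x : (ι → R) × (ι → R) → ι → R) (l u V : ι → R) : ι → R :=
  fun i => max (x (u, V) i - l i) 0 * if u i = l i then 1 else 0

/-- The equity map `Ǧ₊(p, V)`. -/
def strictEquity (x y : (ι → R) × (ι → R) → ι → R) (l p V : ι → R) : ι → R :=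
  fun i => max (x (p, V) i - l i) 0 * if l i < y (p, V) i then 1 else 0

/-- The pairs `(p, V)` of payments and equities with `0 ≤ p ≤ l` and `0 ≤ V ≤ (x(p, V) - l)⁺`.
They include all solutions of the clearing systems; the constants `κ` and `κ₁` only need to be
large enough on this set. -/
def feasiblePairs (x : (ι → R) × (ι → R) → ι → R) (l : ι → R) : Set ((ι → R) × (ι → R)) :=
  {s | s.1 ∈ Set.Icc 0 l ∧ 0 ≤ s.2 ∧ ∀ i, s.2 i ≤ max (x s i - l i) 0}

/-- Monotone asset maps `x` and `y` for which `κ` and `κ₁` are valid big-M constants in P2. -/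
structure IsClearingModel (x y : (ι → R) × (ι → R) → ι → R) (l : ι → R) (κ κ₁ : R) : Prop where
  monotone_assets : Monotone x
  monotone_recovered : Monotone y
  recovered_zero_nonneg : 0 ≤ y 0
  kappa_nonneg : 0 ≤ κ
  assets_sub_le : ∀ s ∈ feasiblePairs x l, ∀ i, x s i - l i ≤ κ
  recovered_le : ∀ s ∈ feasiblePairs x l, ∀ i, y s i ≤ κ₁

/-- The map whose fixed points among the admissible triples of P2 are the solutions of the clearing
system. -/
def p2Step (x y : (ι → R) × (ι → R) → ι → R) (l : ι → R) (κ : R) :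
    (ι → R) × (ι → R) × (ι → R) → (ι → R) × (ι → R) × (ι → R) :=
  fun (a, p, V) => (fun i => if l i < y (p, V) i then 1 else 0, y (p, V) ⊓ l,
    fun i => max (x (p, V) i - l i - κ * (1 - a i)) 0)

variable {x y : (ι → R) × (ι → R) → ι → R} {l : ι → R} {κ κ₁ : R} {a p V q W : ι → R}

theorem equity_eq_strictEquity (hp : p = y (p, V) ⊓ l) (hne : ∀ i, y (p, V) i ≠ l i) :
    equity x l p V = strictEquity x y l p V := by
  have hiff (i) : p i = l i ↔ l i < y (p, V) i := by
    rw [congrFun hp i, Pi.inf_apply, inf_eq_right, (hne i).symm.le_iff_lt]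
  funext i
  simp only [equity, strictEquity, hiff]

variable [IsStrictOrderedRing R]

theorem mem_p2Admissible_iff : (a, p, V) ∈ p2Admissible x y l κ κ₁ ↔
    p ∈ Set.Icc 0 l ∧ 0 ≤ V ∧ ∀ i,
      (a i = 0 ∧ y (p, V) i ≤ p i ∧ x (p, V) i - l i - κ ≤ V i) ∨
      (a i = 1 ∧ p i = l i ∧ y (p, V) i ≤ κ₁ ∧ x (p, V) i - l i ≤ V i) := by
  constructor
  · rintro ⟨ha, hp, hV, hyp, hlp, hyl, hxV⟩
    refine ⟨hp, hV, fun i => (ha i).imp (fun h => ⟨h, ?_⟩) (fun h => ⟨h, ?_⟩)⟩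
    · have hyp := hyp i
      have hxV := hxV i
      simp only [h] at hyp hxV
      exact ⟨by linarith, by linarith⟩
    · have hlp := hlp i
      have hyl := hyl i
      have hxV := hxV i
      simp only [h] at hlp hyl hxV
      exact ⟨le_antisymm (hp.2 i) (by linarith), by linarith, by linarith⟩
  · rintro ⟨hp, hV, h⟩
    refine ⟨fun i => (h i).imp And.left And.left, hp, hV, ?_⟩
    simp only [← forall_and]
    intro i
    have hp₀ : 0 ≤ p i := hp.1 i
    have hpl : p i ≤ l i := hp.2 i
    rcases h i with ⟨ha, hy, hx⟩ | ⟨ha, hl, hy, hx⟩ <;> rw [ha] <;>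
      exact ⟨by linarith, by linarith, by linarith, by linarith⟩

theorem infClosed_p2Admissible (hx : Monotone x) (hy : Monotone y) (hκ : 0 ≤ κ) :
    InfClosed (p2Admissible x y l κ κ₁) := by
  rintro ⟨a, p, V⟩ hs ⟨b, q, W⟩ ht
  rw [mem_p2Admissible_iff] at hs ht
  obtain ⟨hp, hV, hs⟩ := hs
  obtain ⟨hq, hW, ht⟩ := ht
  refine mem_p2Admissible_iff.2
    ⟨⟨le_inf hp.1 hq.1, inf_le_left.trans hp.2⟩, le_inf hV hW, fun i => ?_⟩
  have hxp : x (p ⊓ q, V ⊓ W) i ≤ x (p, V) i := hx ⟨inf_le_left, inf_le_left⟩ i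
  have hxq : x (p ⊓ q, V ⊓ W) i ≤ x (q, W) i := hx ⟨inf_le_right, inf_le_right⟩ i
  have hyp : y (p ⊓ q, V ⊓ W) i ≤ y (p, V) i := hy ⟨inf_le_left, inf_le_left⟩ i
  have hyq : y (p ⊓ q, V ⊓ W) i ≤ y (q, W) i := hy ⟨inf_le_right, inf_le_right⟩ i
  have hpl : p i ≤ l i := hp.2 i
  have hql : q i ≤ l i := hq.2 i
  simp only [Pi.inf_apply]
  rcases hs i with ⟨ha, hyp', hxp'⟩ | ⟨ha, hpl', hyp', hxp'⟩ <;>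
  rcases ht i with ⟨hb, hyq', hxq'⟩ | ⟨hb, hql', -, hxq'⟩ <;> rw [ha, hb]
  on_goal 4 => exact .inr ⟨by simp, by rw [hpl', hql', inf_idem], by linarith,
    le_inf (by linarith) (by linarith)⟩
  all_goals exact .inl ⟨by simp, le_inf (by linarith) (by linarith),
    le_inf (by linarith) (by linarith)⟩

theorem p2Step_le {t : (ι → R) × (ι → R) × (ι → R)} (ht : t ∈ p2Admissible x y l κ κ₁) :
    p2Step x y l κ t ≤ t := by
  obtain ⟨a, p, V⟩ := t
  have ⟨_, _, _, _, _, _, hxV⟩ := ht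
  obtain ⟨hp, hV, h⟩ := mem_p2Admissible_iff.1 ht
  refine ⟨fun i => ?_, fun i => ?_, fun i => max_le (hxV i) (hV i)⟩
  · rcases h i with ⟨ha, hyp, -⟩ | ⟨ha, -⟩
    · exact (if_neg (hyp.trans (hp.2 i)).not_gt).trans ha.symm |>.le
    · exact (ite_le_one le_rfl zero_le_one).trans ha.ge
  · rcases h i with ⟨-, hyp, -⟩ | ⟨-, hpl, -⟩
    · exact inf_le_left.trans hyp
    · exact inf_le_right.trans hpl.ge

theorem p2Step_mem (hx : Monotone x) (hy : Monotone y) (hy₀ : 0 ≤ y 0) (hκ : 0 ≤ κ)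
    {t : (ι → R) × (ι → R) × (ι → R)} (ht : t ∈ p2Admissible x y l κ κ₁) :
    p2Step x y l κ t ∈ p2Admissible x y l κ κ₁ := by
  obtain ⟨a, p, V⟩ := t
  obtain ⟨hp, hV, h⟩ := mem_p2Admissible_iff.1 ht
  have hy_nonneg : 0 ≤ y (p, V) := hy₀.trans (hy ⟨hp.1, hV⟩)
  refine mem_p2Admissible_iff.2 ⟨⟨le_inf hy_nonneg (hp.1.trans hp.2), inf_le_right⟩,
    fun i => le_max_right _ _, fun i => ?_⟩
  have hx' := hx (p2Step_le ht).2 i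
  have hy' := hy (p2Step_le ht).2 i
  simp only [p2Step] at hx' hy'
  rcases h i with ⟨ha, hyp, -⟩ | ⟨ha, -, hyκ, -⟩
  · have hyl := hyp.trans (hp.2 i)
    refine .inl ⟨if_neg hyl.not_gt, le_inf hy' (hy'.trans hyl), le_max_of_le_left ?_⟩
    rw [ha]
    linarith
  · by_cases hyl : l i < y (p, V) i
    · refine .inr ⟨if_pos hyl, inf_eq_right.2 hyl.le, hy'.trans hyκ, le_max_of_le_left ?_⟩
      rw [ha]
      linarith
    · rw [not_lt] at hyl
      refine .inl ⟨if_neg hyl.not_gt, le_inf hy' (hy'.trans hyl), le_max_of_le_left ?_⟩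
      rw [ha]
      linarith

theorem clearing_of_p2Step_eq (hκ : 0 ≤ κ) (hcap : ∀ s ∈ feasiblePairs x l, ∀ i, x s i - l i ≤ κ)
    (h : (a, p, V) ∈ p2Admissible x y l κ κ₁) (hfix : p2Step x y l κ (a, p, V) = (a, p, V)) :
    p = y (p, V) ⊓ l ∧ V = strictEquity x y l p V := by
  obtain ⟨ha, hp, hV⟩ : (fun i => if l i < y (p, V) i then 1 else 0) = a ∧ y (p, V) ⊓ l = p ∧
    (fun i => max (x (p, V) i - l i - κ * (1 - a i)) 0) = V := by simpa [p2Step] using hfix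
  have hV_le (i) : V i ≤ max (x (p, V) i - l i) 0 := by
    rw [← congrFun hV i, ← congrFun ha i]
    refine max_le_max_right 0 ?_
    split_ifs <;> linarith
  have hx_le := hcap (p, V) ⟨h.2.1, h.2.2.1, hV_le⟩
  refine ⟨hp.symm, funext fun i => ?_⟩
  have hVi := congrFun hV i
  rw [← congrFun ha i] at hVi
  rw [← hVi, strictEquity]
  split_ifs
  · simp
  · simpa using hx_le i

theorem mem_p2Admissible_of_clearing (hx : ∀ s ∈ feasiblePairs x l, ∀ i, x s i - l i ≤ κ)
    (hy : ∀ s ∈ feasiblePairs x l, ∀ i, y s i ≤ κ₁) (hq : q ∈ Set.Icc 0 l)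
    (hqy : q = y (q, W) ⊓ l) (hW : W = equity x l q W) :
    (fun i => if q i = l i then 1 else 0, q, W) ∈ p2Admissible x y l κ κ₁ := by
  have hW_eq (i) : W i = if q i = l i then max (x (q, W) i - l i) 0 else 0 := by
    simpa [equity] using congrFun hW i
  have hfeas : (q, W) ∈ feasiblePairs x l := by
    refine ⟨hq, fun i => ?_, fun i => ?_⟩ <;> simp only [hW_eq i] <;> split_ifs <;> simp
  refine mem_p2Admissible_iff.2 ⟨hq, hfeas.2.1, fun i => ?_⟩
  by_cases hql : q i = l i
  · refine .inr ⟨if_pos hql, hql, hy _ hfeas i, ?_⟩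
    rw [hW_eq i, if_pos hql]
    exact le_max_left _ _
  · have hqi : q i = min (y (q, W) i) (l i) := congrFun hqy i
    have hmin : min (y (q, W) i) (l i) = y (q, W) i :=
      (min_choice _ _).resolve_right (hqi ▸ hql)
    refine .inl ⟨if_neg hql, (hqi.trans hmin).ge, ?_⟩
    rw [hW_eq i, if_neg hql]
    linarith [hx _ hfeas i]

theorem IsClearingModel.isLeast_of_forall_le {S : Type*} [Preorder S]
    (hm : IsClearingModel x y l κ κ₁)
    {f : (ι → R) × (ι → R) × (ι → R) → S} (hf : StrictMono f) {t : (ι → R) × (ι → R) × (ι → R)}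
    (ht : t ∈ p2Admissible x y l κ κ₁) (hopt : ∀ s ∈ p2Admissible x y l κ κ₁, f t ≤ f s) :
    IsLeast (p2Admissible x y l κ κ₁) t :=
  (infClosed_p2Admissible hm.monotone_assets hm.monotone_recovered hm.kappa_nonneg).codirectedOn
    |>.minimal_iff_isLeast.1 <|
      MinimalFor.minimal_of_strictMonoOn (hf.strictMonoOn _) ⟨ht, fun s hs _ => hopt s hs⟩

theorem stmt15_general {S : Type*} [Preorder S] (hm : IsClearingModel x y l κ κ₁)
    {f : (ι → R) × (ι → R) × (ι → R) → S} (hf : StrictMono f)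
    (hadm : (a, p, V) ∈ p2Admissible x y l κ κ₁)
    (hopt : ∀ t ∈ p2Admissible x y l κ κ₁, f (a, p, V) ≤ f t)
    {H : (ι → R) → ι → R}
    (hH : ∀ u ∈ Set.Icc 0 l, H u = equity x l u (H u) ∧ ∀ W, W = equity x l u W → W = H u)
    (hq : IsLeast {u ∈ Set.Icc 0 l | u = y (u, H u) ⊓ l} q) :
    p = y (p, V) ⊓ l ∧ V = strictEquity x y l p V ∧ p ≤ q ∧
      ((∀ i, y (p, V) i ≠ l i) → p = q) := by
  have hleast := hm.isLeast_of_forall_le hf hadm hopt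
  have hmem := p2Step_mem hm.monotone_assets hm.monotone_recovered hm.recovered_zero_nonneg
    hm.kappa_nonneg hadm
  have hfix : p2Step x y l κ (a, p, V) = (a, p, V) := (p2Step_le hadm).antisymm (hleast.2 hmem)
  obtain ⟨hp, hV⟩ := clearing_of_p2Step_eq hm.kappa_nonneg hm.assets_sub_le hadm hfix
  obtain ⟨⟨hql, hqy⟩, hq_le⟩ := hq
  have hqadm :=
    mem_p2Admissible_of_clearing hm.assets_sub_le hm.recovered_le hql hqy (hH q hql).1
  have hpq : p ≤ q := (hleast.2 hqadm).2.1
  refine ⟨hp, hV, hpq, fun hne => hpq.antisymm (hq_le ⟨hadm.2.1, ?_⟩)⟩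
  have hVH : V = H p := (hH p hadm.2.1).2 V (hV.trans (equity_eq_strictEquity hp hne).symm)
  rwa [← hVH]

end Clearing

section Affine

variable {ι R : Type*} [Fintype ι] [CommRing R] [LinearOrder R]
  {e l : ι → R} {A B : Matrix ι ι R} {α β γ κ κ₁ : R}

/-- The asset map `x(p, V)`, with `A = Π'` and `B = Θ'`. -/
def assets (e : ι → R) (A B : Matrix ι ι R) : (ι → R) × (ι → R) → ι → R :=
  fun s i => e i + (A *ᵥ s.1) i + (B *ᵥ s.2) i

/-- The asset map `y(p, V)`, with recovery rates `α`, `β` and `γ`. -/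
def recoveredAssets (α β γ : R) (e : ι → R) (A B : Matrix ι ι R) :
    (ι → R) × (ι → R) → ι → R :=
  fun s i => α * e i + β * (A *ᵥ s.1) i + γ * (B *ᵥ s.2) i

/-- The vector `K`, which bounds the equities of all feasible pairs. -/
noncomputable def equityBound [DecidableEq ι] (e l : ι → R) (A B : Matrix ι ι R) : ι → R :=
  (1 - B)⁻¹ *ᵥ fun i => max (e i + (A *ᵥ l) i - l i) 0

theorem equityBound_sub_mulVec [DecidableEq ι] (hunit : IsUnit (1 - B)) (i : ι) :
    equityBound e l A B i - (B *ᵥ equityBound e l A B) i =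
      max (e i + (A *ᵥ l) i - l i) 0 := by
  have h : (1 - B) *ᵥ equityBound e l A B = fun i => max (e i + (A *ᵥ l) i - l i) 0 := by
    rw [equityBound, mulVec_mulVec, mul_nonsing_inv _ ((isUnit_iff_isUnit_det _).1 hunit),
      one_mulVec]
  simpa only [sub_mulVec, one_mulVec, Pi.sub_apply] using congrFun h i

variable [IsStrictOrderedRing R]

theorem monotone_assets (hA : ∀ i j, 0 ≤ A i j) (hB : ∀ i j, 0 ≤ B i j) :
    Monotone (assets e A B) := fun _ _ h i =>
  add_le_add (add_le_add_right (mulVec_mono hA h.1 i) _) (mulVec_mono hB h.2 i)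

theorem monotone_recoveredAssets (hβ : 0 ≤ β) (hγ : 0 ≤ γ) (hA : ∀ i j, 0 ≤ A i j)
    (hB : ∀ i j, 0 ≤ B i j) : Monotone (recoveredAssets α β γ e A B) := fun _ _ h i =>
  add_le_add (add_le_add_right (mul_le_mul_of_nonneg_left (mulVec_mono hA h.1 i) hβ) _)
    (mul_le_mul_of_nonneg_left (mulVec_mono hB h.2 i) hγ)

theorem recoveredAssets_le_assets (he : 0 ≤ e) (hA : ∀ i j, 0 ≤ A i j) (hB : ∀ i j, 0 ≤ B i j)
    (hα : α ≤ 1) (hβ : β ≤ 1) (hγ : γ ≤ 1) {s : (ι → R) × (ι → R)} (hs : 0 ≤ s) :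
    recoveredAssets α β γ e A B s ≤ assets e A B s := fun i =>
  add_le_add (add_le_add (mul_le_of_le_one_left (he i) hα)
      (mul_le_of_le_one_left (mulVec_nonneg hA hs.1 i) hβ))
    (mul_le_of_le_one_left (mulVec_nonneg hB hs.2 i) hγ)

variable [DecidableEq ι]

theorem equityBound_nonneg (hInv : ∀ i j, 0 ≤ (1 - B)⁻¹ i j) : 0 ≤ equityBound e l A B :=
  mulVec_nonneg hInv fun _ => le_max_right _ _

theorem le_equityBound (hA : ∀ i j, 0 ≤ A i j) (hB : ∀ i j, 0 ≤ B i j) (hunit : IsUnit (1 - B))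
    (hInv : ∀ i j, 0 ≤ (1 - B)⁻¹ i j) {s : (ι → R) × (ι → R)}
    (hs : s ∈ feasiblePairs (assets e A B) l) : s.2 ≤ equityBound e l A B := by
  obtain ⟨hp, hV₀, hV⟩ := hs
  refine le_inv_mulVec hunit hInv fun i => ?_
  rw [sub_mulVec, one_mulVec, Pi.sub_apply, sub_le_iff_le_add]
  refine (hV i).trans (max_le ?_ (add_nonneg (le_max_right _ _) (mulVec_nonneg hB hV₀ i)))
  simp only [assets]
  linarith [mulVec_mono hA hp.2 i, le_max_left (e i + (A *ᵥ l) i - l i) 0]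

theorem assets_sub_le_equityBound (hA : ∀ i j, 0 ≤ A i j) (hB : ∀ i j, 0 ≤ B i j)
    (hunit : IsUnit (1 - B)) (hInv : ∀ i j, 0 ≤ (1 - B)⁻¹ i j)
    {s : (ι → R) × (ι → R)} (hs : s ∈ feasiblePairs (assets e A B) l) (i : ι) :
    assets e A B s i - l i ≤ equityBound e l A B i := by
  have hmono : assets e A B s i ≤ assets e A B (l, equityBound e l A B) i :=
    monotone_assets hA hB ⟨hs.1.2, le_equityBound hA hB hunit hInv hs⟩ i
  simp only [assets] at hmono ⊢
  linarith [equityBound_sub_mulVec (e := e) (l := l) (A := A) hunit i,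
    le_max_left (e i + (A *ᵥ l) i - l i) 0]

theorem isClearingModel_affine [Nonempty ι] (he : 0 ≤ e) (hA : ∀ i j, 0 ≤ A i j)
    (hB : ∀ i j, 0 ≤ B i j) (hα : α ∈ Set.Icc 0 1) (hβ : β ∈ Set.Icc 0 1) (hγ : γ ∈ Set.Icc 0 1)
    (hunit : IsUnit (1 - B)) (hInv : ∀ i j, 0 ≤ (1 - B)⁻¹ i j)
    (hκ : ∀ i, equityBound e l A B i ≤ κ)
    (hκ₁ : ∀ i, e i + (A *ᵥ l) i + κ * (B *ᵥ fun _ => 1) i ≤ κ₁) :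
    IsClearingModel (assets e A B) (recoveredAssets α β γ e A B) l κ κ₁ where
  monotone_assets := monotone_assets hA hB
  monotone_recovered := monotone_recoveredAssets hβ.1 hγ.1 hA hB
  recovered_zero_nonneg i := by simpa [recoveredAssets] using mul_nonneg hα.1 (he i)
  kappa_nonneg :=
    let ⟨i⟩ := ‹Nonempty ι›
    (equityBound_nonneg hInv i).trans (hκ i)
  assets_sub_le s hs i := (assets_sub_le_equityBound hA hB hunit hInv hs i).trans (hκ i)
  recovered_le s hs i := by
    have hV_le : s.2 ≤ κ • fun _ => 1 := fun j => by
      simpa using (le_equityBound hA hB hunit hInv hs j).trans (hκ j)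
    calc recoveredAssets α β γ e A B s i
        ≤ assets e A B s i := recoveredAssets_le_assets he hA hB hα.2 hβ.2 hγ.2
            ⟨hs.1.1, hs.2.1⟩ i
      _ ≤ assets e A B (l, κ • fun _ => 1) i := monotone_assets hA hB ⟨hs.1.2, hV_le⟩ i
      _ ≤ κ₁ := by simpa only [assets, mulVec_smul, Pi.smul_apply, smul_eq_mul] using hκ₁ i

end Affine

/-- If `(ǎ,p̌,V̌)` is optimal for problem P2, then `(p̌,V̌)` solves the
system `p = y(p,V) ∧ l`, `V = Ǧ₊(p,V)` where `Ǧ₊(p,V) := (x(p,V) − l)⁺ ∘ 1_{y(p,V)>l}`;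
moreover `p̌ ≤ p̲`, where `p̲` is the minimal fixpoint of `F_𝟘` in `[0,l]`; and if
`yʲ(p̌,V̌) ≠ lʲ` for every `j`, then `p̌ = p̲`. -/
theorem stmt15 (N : ℕ) (hN : 1 < N)
    (e l : Fin N → ℝ) (he : 0 ≤ e) (hl : 0 ≤ l)
    (P Th : Matrix (Fin N) (Fin N) ℝ)
    (hP : ∀ i j, 0 ≤ P i j) (hProw : ∀ i, ∑ j, P i j = 1)
    (hTh : ∀ i j, 0 ≤ Th i j) (hThrow : ∀ i, ∑ j, Th i j ≤ 1)
    (α β γ : ℝ) (hα : α ∈ Set.Icc (0:ℝ) 1) (hβ : β ∈ Set.Icc (0:ℝ) 1)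
    (hγ : γ ∈ Set.Icc (0:ℝ) 1)
    (hInv : IsUnit (1 - Th.transpose))
    (hInvNonneg : ∀ i j, 0 ≤ (1 - Th.transpose)⁻¹ i j)
    (K : Fin N → ℝ)
    (hK : K = (1 - Th.transpose)⁻¹.mulVec
      (fun i => max (e i + P.transpose.mulVec l i - l i) 0))
    (κ : ℝ) (hκ : κ = ⨆ i, K i)
    (κ₁ : ℝ) (hκ₁ : κ₁ = ⨆ i,
      (e i + P.transpose.mulVec l i + κ * Th.transpose.mulVec (fun _ => (1:ℝ)) i))
    (f₁ f₂ f₃ : Fin N → ℝ)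
    (hf₁ : ∀ i, 0 < f₁ i) (hf₂ : ∀ i, 0 < f₂ i) (hf₃ : ∀ i, 0 < f₃ i)
    (f : (Fin N → ℝ) → (Fin N → ℝ) → (Fin N → ℝ) → ℝ)
    (hf : f = fun a p V => ∑ i, (f₁ i * a i + f₂ i * p i + f₃ i * V i))
    (Adm2 : (Fin N → ℝ) → (Fin N → ℝ) → (Fin N → ℝ) → Prop)
    (hAdm2 : ∀ a p V : Fin N → ℝ, Adm2 a p V ↔
      ((∀ i, a i = 0 ∨ a i = 1) ∧ p ∈ Set.Icc (0 : Fin N → ℝ) l ∧ 0 ≤ V ∧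
      (∀ i, α * e i + β * P.transpose.mulVec p i + γ * Th.transpose.mulVec V i
        - κ₁ * a i ≤ p i) ∧
      (∀ i, a i * l i ≤ p i) ∧
      (∀ i, α * e i + β * P.transpose.mulVec p i + γ * Th.transpose.mulVec V i
        ≤ (1 - a i) * l i + κ₁ * a i) ∧
      (∀ i, e i + P.transpose.mulVec p i + Th.transpose.mulVec V i - l i
        - κ * (1 - a i) ≤ V i)))
    (acheck pcheck Vcheck : Fin N → ℝ)
    (hAdm : Adm2 acheck pcheck Vcheck)
    (hOpt : ∀ a p V : Fin N → ℝ, Adm2 a p V → f acheck pcheck Vcheck ≤ f a p V)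
    (Gp : (Fin N → ℝ) → (Fin N → ℝ) → Fin N → ℝ)
    (hGp : Gp = fun u V i =>
      max (e i + P.transpose.mulVec u i + Th.transpose.mulVec V i - l i) 0 *
        (if u i = l i then (1 : ℝ) else 0))
    (H : (Fin N → ℝ) → Fin N → ℝ)
    (hH : ∀ u ∈ Set.Icc (0 : Fin N → ℝ) l,
      H u = Gp u (H u) ∧ ∀ W : Fin N → ℝ, W = Gp u W → W = H u)
    (F : (Fin N → Bool) → (Fin N → ℝ) → Fin N → ℝ)
    (hF : F = fun b p i =>
      let V := H p
      let xi := e i + P.transpose.mulVec p i + Th.transpose.mulVec V i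
      let yi := α * e i + β * P.transpose.mulVec p i + γ * Th.transpose.mulVec V i
      let di : ℝ := if xi < l i then 1 else 0
      if b i then yi * di + l i * (1 - di) else min yi (l i))
    (plow : Fin N → ℝ)
    -- `plow` is the minimal fixpoint of `F_𝟘` in `[0,l]`
    (hplow : plow ∈ Set.Icc (0 : Fin N → ℝ) l ∧ plow = F (fun _ => false) plow ∧
      ∀ q ∈ Set.Icc (0 : Fin N → ℝ) l, q = F (fun _ => false) q → plow ≤ q) :
    (pcheck = fun j =>
      min (α * e j + β * P.transpose.mulVec pcheck j
        + γ * Th.transpose.mulVec Vcheck j) (l j)) ∧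
    (Vcheck = fun j =>
      max (e j + P.transpose.mulVec pcheck j + Th.transpose.mulVec Vcheck j - l j) 0 *
        (if l j < α * e j + β * P.transpose.mulVec pcheck j
          + γ * Th.transpose.mulVec Vcheck j then (1 : ℝ) else 0)) ∧
    pcheck ≤ plow ∧
    ((∀ j, α * e j + β * P.transpose.mulVec pcheck j
        + γ * Th.transpose.mulVec Vcheck j ≠ l j) → pcheck = plow) := by
  have : NeZero N := ⟨by omega⟩
  subst hf hGp hF hκ₁ hκ hK
  have hm := isClearingModel_affine he (fun i j => hP j i) (fun i j => hTh j i) hα hβ hγ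
    hInv hInvNonneg (le_ciSup (Set.finite_range (equityBound e l Pᵀ Thᵀ)).bddAbove)
    (le_ciSup (Set.finite_range _).bddAbove)
  exact stmt15_general hm (strictMono_weightedSum hf₁ hf₂ hf₃) ((hAdm2 _ _ _).1 hAdm)
    (fun t ht => hOpt _ _ _ ((hAdm2 _ _ _).2 ht)) hH
    ⟨⟨hplow.1, hplow.2.1⟩, fun q hq => hplow.2.2 q hq.1 hq.2⟩
end

section
/- If e + Π'l + Θ'H(l) ≥ l componentwise, then (l, H(l)) is a clearing pair, and it is the maximal one: for every clearing pair (p,V), p ≤ l and V ≤ H(l). -/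
open Matrix

/-!
At full payment the equities are fixed points of `V ↦ (x(l, V) - l)⁺`. This map is monotone and,
because the rows of `Θ` sum to at most one, increasing its argument raises the total of its values
by no more than the total of the argument. The equity `V` of any clearing pair is a subsolution,
and so is `W := V ⊔ H(l)`. As `W` lies above the fixed point `H(l)`, comparing totals leaves no
room for a strict inequality in `W ≤ (x(l, W) - l)⁺`. Hence `W` is itself a fixed point, and
`W = H(l)` as soon as no fixed point is larger than `H(l)`.
-/

section SumNonexpansive

variable {ι M : Type*} [Fintype ι] [AddCommGroup M]

/-- A self-map of `ι → M` is sum-nonexpansive if raising its argument increases the total of its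
values by at most the increase of the total of the argument. Nothing is asked of incomparable
arguments, so for a monotone real map this is `ℓ¹`-nonexpansiveness on comparable pairs. -/
def IsSumNonexpansive [LE M] (Φ : (ι → M) → ι → M) : Prop :=
  ∀ ⦃v w⦄, v ≤ w → ∑ i, (Φ w - Φ v) i ≤ ∑ i, (w - v) i

namespace IsSumNonexpansive

variable {Φ : (ι → M) → ι → M} {h v w : ι → M}

theorem isFixedPt_of_le_map [PartialOrder M] [IsOrderedAddMonoid M] (hΦ : IsSumNonexpansive Φ)
    (hfix : Φ.IsFixedPt h) (hhw : h ≤ w) (hw : w ≤ Φ w) : Φ.IsFixedPt w := by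
  have htotal : ∑ i, Φ w i ≤ ∑ i, w i := by
    simpa only [hfix.eq, Pi.sub_apply, Finset.sum_sub_distrib, sub_le_sub_iff_right] using hΦ hhw
  by_contra hne
  exact htotal.not_gt (Fintype.sum_strictMono (hw.lt_of_ne' hne))

theorem le_of_le_map [Lattice M] [IsOrderedAddMonoid M] (hΦ : IsSumNonexpansive Φ)
    (hmono : Monotone Φ) (hmax : Maximal Φ.IsFixedPt h) (hv : v ≤ Φ v) : v ≤ h := by
  have hsub : v ⊔ h ≤ Φ (v ⊔ h) :=
    (sup_le_sup hv hmax.prop.eq.ge).trans (hmono.le_map_sup v h)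
  exact le_sup_left.trans
    (hmax.le_of_ge (hΦ.isFixedPt_of_le_map hmax.prop le_sup_right hsub) le_sup_right)

end IsSumNonexpansive

end SumNonexpansive

theorem posPart_sub_posPart_le {M : Type*} [AddCommGroup M] [Lattice M] [IsOrderedAddMonoid M]
    {a b : M} (hab : a ≤ b) : b⁺ - a⁺ ≤ b - a := by
  rw [sub_le_iff_le_add]
  refine sup_le ?_ (add_nonneg (sub_nonneg.2 hab) (posPart_nonneg a))
  simpa only [sub_add_cancel] using add_le_add_right (le_posPart a) (b - a)

section NonnegMatrix

variable {m n R : Type*} [Fintype n]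

theorem monotone_mulVec_of_nonneg [Semiring R] [PartialOrder R] [IsOrderedRing R]
    {A : Matrix m n R} (hA : ∀ i j, 0 ≤ A i j) : Monotone (A *ᵥ ·) :=
  fun _ _ hvw i => dotProduct_le_dotProduct_of_nonneg_left hvw (hA i)

theorem sum_mulVec_le_sum [Fintype m] [Semiring R] [PartialOrder R] [IsOrderedRing R]
    {A : Matrix m n R} (hA : ∀ j, ∑ i, A i j ≤ 1) {v : n → R} (hv : 0 ≤ v) :
    ∑ i, (A *ᵥ v) i ≤ ∑ j, v j := by
  have hcol : 1 ᵥ* A ≤ 1 := fun j => (one_dotProduct (A.col j)).trans_le (hA j)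
  calc ∑ i, (A *ᵥ v) i = (1 ᵥ* A) ⬝ᵥ v := by rw [← one_dotProduct, dotProduct_mulVec]
    _ ≤ 1 ⬝ᵥ v := dotProduct_le_dotProduct_of_nonneg_right hcol hv
    _ = ∑ j, v j := one_dotProduct v

end NonnegMatrix

section Clearing

variable {ι R : Type*} [Fintype ι] [Ring R] [LinearOrder R]

/-- The assets `x(p, V) = e + Π'p + Θ'V` of the firms when the debt payments are `p` and the
equities are `V`; the matrix `P` stands for `Π` and `Th` for `Θ`. -/
def totalAssets (e : ι → R) (P Th : Matrix ι ι R) (p V : ι → R) : ι → R :=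
  e + Pᵀ *ᵥ p + Thᵀ *ᵥ V

/-- The map `G₊`: the equities implied by payments `u` and previously assumed equities `V`, where
only firms paying in full have any. -/
def equityMap (e l : ι → R) (P Th : Matrix ι ι R) (u V : ι → R) : ι → R :=
  (totalAssets e P Th u V - l)⁺ * fun i => if u i = l i then 1 else 0

/-- The notion of clearing pair `(p, V)`. The last three clauses are limited liability, absolute
priority and equity evaluation. The payment `y p V` of defaulting firms, `αe + βΠ'p + γΘ'V` in the
paper, is here an arbitrary function of the pair. -/
def IsClearing (e l : ι → R) (P Th : Matrix ι ι R) (y : (ι → R) → (ι → R) → ι → R)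
    (p V : ι → R) : Prop :=
  p ∈ Set.Icc 0 l ∧ 0 ≤ V ∧ (∀ i, p i ≤ totalAssets e P Th p V i) ∧
    (∀ i, p i = l i ∨ p i = y p V i) ∧
    ∀ i, (p i = l i → V i = totalAssets e P Th p V i - p i) ∧ (p i ≠ l i → V i = 0)

variable {e l p u v w h V : ι → R} {P Th : Matrix ι ι R} {y : (ι → R) → (ι → R) → ι → R}

theorem equityMap_apply_of_eq {i : ι} (hu : u i = l i) :
    equityMap e l P Th u V i = (totalAssets e P Th u V i - l i)⁺ := by
  simp [equityMap, hu]

theorem equityMap_apply_of_ne {i : ι} (hu : u i ≠ l i) : equityMap e l P Th u V i = 0 := by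
  simp [equityMap, hu]

theorem equityMap_nonneg : 0 ≤ equityMap e l P Th u V := fun i => by
  by_cases hu : u i = l i
  · exact (posPart_nonneg _).trans_eq (equityMap_apply_of_eq hu).symm
  · exact (equityMap_apply_of_ne hu).ge

variable [IsOrderedRing R]

theorem totalAssets_mono_left (hP : ∀ i j, 0 ≤ P i j) (V : ι → R) :
    Monotone (totalAssets e P Th · V) := fun _ _ hpu =>
  add_le_add_left (add_le_add_right (monotone_mulVec_of_nonneg (fun i j => hP j i) hpu) e) _

theorem totalAssets_mono_right (hTh : ∀ i j, 0 ≤ Th i j) (p : ι → R) :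
    Monotone (totalAssets e P Th p) := fun _ _ hvw =>
  add_le_add_right (monotone_mulVec_of_nonneg (fun i j => hTh j i) hvw) _

theorem equityMap_mono_right (hTh : ∀ i j, 0 ≤ Th i j) (u : ι → R) :
    Monotone (equityMap e l P Th u) := fun v w hvw i => by
  by_cases hu : u i = l i
  · rw [equityMap_apply_of_eq hu, equityMap_apply_of_eq hu]
    exact posPart_mono (sub_le_sub_right (totalAssets_mono_right hTh u hvw i) _)
  · rw [equityMap_apply_of_ne hu, equityMap_apply_of_ne hu]

theorem equityMap_sub_le (hTh : ∀ i j, 0 ≤ Th i j) (hvw : v ≤ w) :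
    equityMap e l P Th u w - equityMap e l P Th u v ≤ Thᵀ *ᵥ (w - v) := by
  have hassets : totalAssets e P Th u w - totalAssets e P Th u v = Thᵀ *ᵥ (w - v) := by
    rw [totalAssets, totalAssets, add_sub_add_left_eq_sub, mulVec_sub]
  have hmono := totalAssets_mono_right (e := e) (P := P) hTh u hvw
  rw [← hassets]
  intro i
  by_cases hu : u i = l i
  · simpa only [Pi.sub_apply, equityMap_apply_of_eq hu, sub_sub_sub_cancel_right] using
      posPart_sub_posPart_le (sub_le_sub_right (hmono i) (l i))
  · simpa only [Pi.sub_apply, equityMap_apply_of_ne hu, sub_zero] using sub_nonneg.2 (hmono i)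

theorem isSumNonexpansive_equityMap (hTh : ∀ i j, 0 ≤ Th i j) (hThrow : ∀ i, ∑ j, Th i j ≤ 1)
    (u : ι → R) : IsSumNonexpansive (equityMap e l P Th u) := fun _ _ hvw =>
  (Finset.sum_le_sum fun i _ => equityMap_sub_le hTh hvw i).trans
    (sum_mulVec_le_sum hThrow (sub_nonneg.2 hvw))

theorem isClearing_of_isFixedPt_equityMap (hl : 0 ≤ l)
    (hfix : (equityMap e l P Th l).IsFixedPt h) (hcond : l ≤ totalAssets e P Th l h) :
    IsClearing e l P Th y l h := by
  have hequity : ∀ i, h i = totalAssets e P Th l h i - l i := fun i => by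
    rw [← posPart_of_nonneg (sub_nonneg.2 (hcond i)), ← equityMap_apply_of_eq rfl, hfix.eq]
  exact ⟨⟨hl, le_rfl⟩, hfix.eq ▸ equityMap_nonneg, hcond, fun _ => Or.inl rfl,
    fun i => ⟨fun _ => hequity i, fun hne => (hne rfl).elim⟩⟩

theorem IsClearing.le_equityMap (hP : ∀ i j, 0 ≤ P i j) (hpV : IsClearing e l P Th y p V) :
    V ≤ equityMap e l P Th l V := fun i => by
  obtain ⟨⟨_, hpl⟩, _, _, _, hequity⟩ := hpV
  by_cases hpi : p i = l i
  · calc V i = totalAssets e P Th p V i - l i := by rw [(hequity i).1 hpi, hpi]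
      _ ≤ totalAssets e P Th l V i - l i :=
        sub_le_sub_right (totalAssets_mono_left hP V hpl i) (l i)
      _ ≤ equityMap e l P Th l V i := (le_posPart _).trans_eq (equityMap_apply_of_eq rfl).symm
  · exact ((hequity i).2 hpi).trans_le (equityMap_nonneg i)

theorem stmt16_general (hl : 0 ≤ l) (hP : ∀ i j, 0 ≤ P i j) (hTh : ∀ i j, 0 ≤ Th i j)
    (hThrow : ∀ i, ∑ j, Th i j ≤ 1) (hmax : Maximal (equityMap e l P Th l).IsFixedPt h)
    (hcond : l ≤ totalAssets e P Th l h) :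
    IsClearing e l P Th y l h ∧ ∀ p V, IsClearing e l P Th y p V → p ≤ l ∧ V ≤ h :=
  ⟨isClearing_of_isFixedPt_equityMap hl hmax.prop hcond, fun _ _ hpV =>
    ⟨hpV.1.2, (isSumNonexpansive_equityMap hTh hThrow l).le_of_le_map
      (equityMap_mono_right hTh l) hmax (hpV.le_equityMap hP)⟩⟩

end Clearing

/-- If `e + Π'l + Θ'H(l) ≥ l` componentwise, then `(l, H(l))` is a
clearing pair, and it is the maximal one: for every clearing pair `(p,V)`, `p ≤ l`
and `V ≤ H(l)`. -/
theorem stmt16 (N : ℕ) (hN : 1 < N)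
    (e l : Fin N → ℝ) (he : 0 ≤ e) (hl : 0 ≤ l)
    (P Th : Matrix (Fin N) (Fin N) ℝ)
    (hP : ∀ i j, 0 ≤ P i j) (hProw : ∀ i, ∑ j, P i j = 1)
    (hTh : ∀ i j, 0 ≤ Th i j) (hThrow : ∀ i, ∑ j, Th i j ≤ 1)
    (α β γ : ℝ) (hα : α ∈ Set.Icc (0:ℝ) 1) (hβ : β ∈ Set.Icc (0:ℝ) 1)
    (hγ : γ ∈ Set.Icc (0:ℝ) 1)
    (Clearing : (Fin N → ℝ) → (Fin N → ℝ) → Prop)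
    (hClearing : ∀ p V : Fin N → ℝ, Clearing p V ↔
      (p ∈ Set.Icc (0 : Fin N → ℝ) l ∧ 0 ≤ V ∧
      (∀ i, p i ≤ e i + P.transpose.mulVec p i + Th.transpose.mulVec V i) ∧
      (∀ i, p i = l i ∨
        p i = α * e i + β * P.transpose.mulVec p i + γ * Th.transpose.mulVec V i) ∧
      (∀ i, (p i = l i →
          V i = e i + P.transpose.mulVec p i + Th.transpose.mulVec V i - p i) ∧
        (p i ≠ l i → V i = 0))))
    (Gp : (Fin N → ℝ) → (Fin N → ℝ) → Fin N → ℝ)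
    (hGp : Gp = fun u V i =>
      max (e i + P.transpose.mulVec u i + Th.transpose.mulVec V i - l i) 0 *
        (if u i = l i then (1 : ℝ) else 0))
    (H : (Fin N → ℝ) → Fin N → ℝ)
    (hH : ∀ u ∈ Set.Icc (0 : Fin N → ℝ) l,
      H u = Gp u (H u) ∧ ∀ W : Fin N → ℝ, W = Gp u W → W = H u)
    (hcond : ∀ i, l i ≤ e i + P.transpose.mulVec l i + Th.transpose.mulVec (H l) i) :
    Clearing l (H l) ∧ ∀ p V : Fin N → ℝ, Clearing p V → p ≤ l ∧ V ≤ H l := by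
  subst hGp
  obtain ⟨hfix, huniq⟩ := hH l ⟨hl, le_rfl⟩
  obtain ⟨hfull, hgreatest⟩ := stmt16_general
    (y := fun p V i => α * e i + β * P.transpose.mulVec p i + γ * Th.transpose.mulVec V i)
    hl hP hTh hThrow ⟨hfix.symm, fun W hW _ => (huniq W hW.symm).le⟩ hcond
  exact ⟨(hClearing _ _).2 hfull, fun p V hpV => hgreatest p V ((hClearing p V).1 hpV)⟩
end

section
/- The matrix Π₁ := Π̃ + α(1 − απ¹¹)⁻¹ T R has nonnegative entries and all its row sums are ≤ 1 (i.e., Π₁ is substochastic). -/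
open Matrix

/-!
Suppress the state `a` of a substochastic chain `P`. A move from `i` either lands on a retained
state at once, with weights `Q`, or goes to `a`, with weight `T i`, and is then continued from `a`
with weights `S = α (1 - α P a a)⁻¹ R`, where `α` discounts each visit to `a` and the geometric
series in `α P a a` accounts for repeated returns. Since `∑ R ≤ 1 - P a a` and `α ≤ 1`, one has
`α ∑ R ≤ 1 - α P a a`, so `∑ S ≤ 1`, and the row sums of `Q + T S` are at most those of `[T | Q]`,
which are row sums of `P`.
-/

/-- Substochastic matrices: the sub-Markov analogue of `Matrix.rowStochastic`, with row sums at
most one. Rectangular matrices are allowed, so that blocks of a transition matrix qualify. -/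
structure IsSubstochastic {m n R : Type*} [Fintype n] [Semiring R] [PartialOrder R]
    (M : Matrix m n R) : Prop where
  nonneg : ∀ i j, 0 ≤ M i j
  sum_row_le_one : ∀ i, ∑ j, M i j ≤ 1

namespace IsSubstochastic

variable {l m n k o R : Type*} [Fintype n] [Fintype k] [Fintype o] [Semiring R] [PartialOrder R]

protected theorem submatrix [IsOrderedAddMonoid R] {M : Matrix m n R} (hM : IsSubstochastic M)
    (f : l → m) {g : k → n} (hg : Function.Injective g) :
    IsSubstochastic (M.submatrix f g) where
  nonneg i j := hM.nonneg (f i) (g j)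
  sum_row_le_one i := calc
    ∑ j, M (f i) (g j) = ∑ j ∈ Finset.univ.map ⟨g, hg⟩, M (f i) j :=
      (Finset.sum_map _ ⟨g, hg⟩ _).symm
    _ ≤ ∑ j, M (f i) j := Finset.sum_le_univ_sum_of_nonneg (hM.nonneg (f i))
    _ ≤ 1 := hM.sum_row_le_one (f i)

theorem fromCols_submatrix [IsOrderedAddMonoid R] {M : Matrix m n R}
    (hM : IsSubstochastic M) (f : l → m) {g : k → n} {g' : o → n}
    (hg : Function.Injective (Sum.elim g g')) :
    IsSubstochastic (fromCols (M.submatrix f g) (M.submatrix f g')) := by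
  convert hM.submatrix f hg using 1
  ext i (j | j) <;> rfl

theorem sum_add_sum_le_one {T : Matrix m k R} {Q : Matrix m n R}
    (h : IsSubstochastic (fromCols T Q)) (i : m) : ∑ j, T i j + ∑ j, Q i j ≤ 1 := by
  simpa only [Fintype.sum_sum_type, fromCols_apply_inl, fromCols_apply_inr]
    using h.sum_row_le_one i

protected theorem add_mul [IsOrderedRing R] {T : Matrix m k R} {Q : Matrix m n R} {S : Matrix k n R}
    (hTQ : IsSubstochastic (fromCols T Q)) (hS : IsSubstochastic S) :
    IsSubstochastic (Q + T * S) where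
  nonneg i j := add_nonneg (hTQ.nonneg i (.inr j)) <|
    Finset.sum_nonneg fun a _ => mul_nonneg (hTQ.nonneg i (.inl a)) (hS.nonneg a j)
  sum_row_le_one i := by
    have sum_mul_row : ∑ j, (T * S) i j = ∑ a, T i a * ∑ j, S a j := by
      simp only [mul_apply, Finset.mul_sum]
      exact Finset.sum_comm
    calc ∑ j, (Q + T * S) i j
      _ = ∑ a, T i a * ∑ j, S a j + ∑ j, Q i j := by
        simp only [Matrix.add_apply, Finset.sum_add_distrib, sum_mul_row, add_comm]
      _ ≤ ∑ a, T i a + ∑ j, Q i j := by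
        gcongr with a
        exact mul_le_of_le_one_right (hTQ.nonneg i (.inl a)) (hS.sum_row_le_one a)
      _ ≤ 1 := hTQ.sum_add_sum_le_one i

end IsSubstochastic

section OrderedField

variable {𝕜 : Type*} [Field 𝕜] [LinearOrder 𝕜] [IsStrictOrderedRing 𝕜]

theorem mul_inv_one_sub_mul_mul_le_one {α p s : 𝕜} (hα : α ∈ Set.Icc 0 1) (hαp : α * p < 1)
    (hps : p + s ≤ 1) : α * (1 - α * p)⁻¹ * s ≤ 1 := by
  have discounted : α * p + α * s ≤ 1 := calc
    α * p + α * s = α * (p + s) := (mul_add α p s).symm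
    _ ≤ α := mul_le_of_le_one_right hα.1 hps
    _ ≤ 1 := hα.2
  rw [mul_right_comm, ← div_eq_mul_inv, div_le_one (sub_pos.2 hαp)]
  exact le_sub_iff_add_le'.2 discounted

theorem IsSubstochastic.mul_inv_one_sub_smul {k n : Type*} [Unique k] [Fintype n]
    {A : Matrix k k 𝕜} {B : Matrix k n 𝕜} (h : IsSubstochastic (fromCols A B)) {α : 𝕜}
    (hα : α ∈ Set.Icc 0 1) (hαA : α * A default default < 1) :
    IsSubstochastic ((α * (1 - α * A default default)⁻¹) • B) where
  nonneg i j := mul_nonneg (mul_nonneg hα.1 (inv_nonneg.2 (sub_nonneg.2 hαA.le)))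
    (h.nonneg i (.inr j))
  sum_row_le_one i := by
    have hrow := h.sum_add_sum_le_one default
    rw [Fintype.sum_unique] at hrow
    obtain rfl := Unique.eq_default i
    simp only [Matrix.smul_apply, smul_eq_mul, ← Finset.mul_sum]
    exact mul_inv_one_sub_mul_mul_le_one hα hαA hrow

theorem stmt17_general {ι κ : Type*} [Fintype ι] [Fintype κ] {P : Matrix ι ι 𝕜}
    (hP : IsSubstochastic P) (e : κ ↪ ι) {a : ι} (ha : ∀ i, a ≠ e i) {α : 𝕜}
    (hα : α ∈ Set.Icc 0 1) (hαa : α * P a a < 1) :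
    IsSubstochastic (P.submatrix e e +
      (α * (1 - α * P a a)⁻¹) • vecMulVec (P.col a ∘ e) (P.row a ∘ e)) := by
  let toPivot : Unit → ι := fun _ => a
  have columns_injective : Function.Injective (Sum.elim toPivot e) :=
    (Function.injective_of_subsingleton toPivot).sumElim e.injective fun _ => ha
  have hTQ : IsSubstochastic (fromCols (P.submatrix e toPivot) (P.submatrix e e)) :=
    hP.fromCols_submatrix e columns_injective
  have hAB : IsSubstochastic (fromCols (P.submatrix toPivot toPivot) (P.submatrix toPivot e)) :=
    hP.fromCols_submatrix toPivot columns_injective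
  rw [vecMulVec_eq Unit, ← Matrix.mul_smul]
  exact hTQ.add_mul (hAB.mul_inv_one_sub_smul hα hαa)

end OrderedField

/-- The matrix `Π₁ := Π̃ + α(1 − απ¹¹)⁻¹ T R` has nonnegative entries and
all its row sums are `≤ 1` (i.e., `Π₁` is substochastic). Here `N = n+1 > 1`, `Π̃` is
`Π` with its first row and column deleted, `T` is the first column of `Π` with the
first entry deleted, and `R` is the first row of `Π` with the first entry deleted. -/
theorem stmt17 (n : ℕ) (hn : 1 ≤ n)
    (P : Matrix (Fin (n + 1)) (Fin (n + 1)) ℝ)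
    (hP : ∀ i j, 0 ≤ P i j) (hProw : ∀ i, ∑ j, P i j ≤ 1)
    (α : ℝ) (hα : α ∈ Set.Icc (0:ℝ) 1) (hα11 : α * P 0 0 < 1)
    (P₁ : Matrix (Fin n) (Fin n) ℝ)
    (hP₁ : P₁ = fun i j =>
      P i.succ j.succ + α * (1 - α * P 0 0)⁻¹ * (P i.succ 0 * P 0 j.succ)) :
    (∀ i j, 0 ≤ P₁ i j) ∧ (∀ i, ∑ j, P₁ i j ≤ 1) := by
  have h := stmt17_general ⟨hP, hProw⟩ (Fin.succEmb n) (fun i => i.succ_ne_zero.symm) hα hα11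
  exact hP₁ ▸ ⟨h.nonneg, h.sum_row_le_one⟩
end

section
/- The matrix Θ₁ := Θ̃ + α(1 − απ¹¹)⁻¹ M R has nonnegative entries and all its row sums are strictly less than 1. -/
open Matrix

/-
Since `α (π¹¹ + ∑ⱼ Rⱼ) ≤ 1`, the weights `α (1 - α π¹¹)⁻¹ Rⱼ` sum to at most `1`. Passing from `Θ`
to `Θ₁` therefore redistributes the entry `θⁱ¹` over the remaining columns with total weight at most
`1`, and no row sum of `Θ₁` exceeds the corresponding row sum of `Θ`.
-/

section RankOneUpdate

variable {R m n : Type*} {A : Matrix m n R} {u : m → R} {v : n → R} {c : R} {i : m}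

theorem add_smul_vecMulVec_apply_nonneg [Semiring R] [PartialOrder R] [IsOrderedRing R] {j : n}
    (hA : 0 ≤ A i j) (hc : 0 ≤ c) (hu : 0 ≤ u i) (hv : 0 ≤ v j) :
    0 ≤ (A + c • vecMulVec u v) i j :=
  add_nonneg hA (mul_nonneg hc (mul_nonneg hu hv))

theorem sum_add_smul_vecMulVec_apply [CommSemiring R] [Fintype n] :
    ∑ j, (A + c • vecMulVec u v) i j = u i * (c * ∑ j, v j) + ∑ j, A i j := by
  simp only [Matrix.add_apply, Matrix.smul_apply, vecMulVec_apply, smul_eq_mul,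
    Finset.sum_add_distrib, ← Finset.mul_sum]
  ring

theorem sum_add_smul_vecMulVec_apply_le [CommSemiring R] [PartialOrder R] [IsOrderedRing R]
    [Fintype n] (hu : 0 ≤ u i) (hcv : c * ∑ j, v j ≤ 1) :
    ∑ j, (A + c • vecMulVec u v) i j ≤ u i + ∑ j, A i j := by
  rw [sum_add_smul_vecMulVec_apply]
  gcongr
  exact mul_le_of_le_one_right hu hcv

end RankOneUpdate

section OrderedField

variable {K : Type*} [Field K] [LinearOrder K] [IsStrictOrderedRing K] {a p : K}

theorem mul_inv_one_sub_mul_nonneg (ha : 0 ≤ a) (hap : a * p < 1) :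
    0 ≤ a * (1 - a * p)⁻¹ :=
  mul_nonneg ha (inv_nonneg.mpr (sub_nonneg.mpr hap.le))

theorem mul_inv_one_sub_mul_mul_le_one_s18 {s : K} (hap : a * p < 1) (has : a * (p + s) ≤ 1) :
    a * (1 - a * p)⁻¹ * s ≤ 1 := by
  rw [mul_right_comm, ← div_eq_mul_inv, div_le_one (sub_pos.mpr hap), le_sub_iff_add_le', ← mul_add]
  exact has

theorem stmt18_general {m n : Type*} [Fintype n] {A : Matrix m n K} {u : m → K} {r : n → K}
    (hA : ∀ i j, 0 ≤ A i j) (hu : ∀ i, 0 ≤ u i) (hr : ∀ j, 0 ≤ r j)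
    (hrow : ∀ i, u i + ∑ j, A i j < 1) (ha : 0 ≤ a) (hap : a * p < 1)
    (har : a * (p + ∑ j, r j) ≤ 1) :
    (∀ i j, 0 ≤ (A + (a * (1 - a * p)⁻¹) • vecMulVec u r) i j) ∧
      ∀ i, ∑ j, (A + (a * (1 - a * p)⁻¹) • vecMulVec u r) i j < 1 :=
  ⟨fun i j => add_smul_vecMulVec_apply_nonneg (hA i j) (mul_inv_one_sub_mul_nonneg ha hap)
      (hu i) (hr j),
    fun i => (sum_add_smul_vecMulVec_apply_le (hu i)
      (mul_inv_one_sub_mul_mul_le_one_s18 hap har)).trans_lt (hrow i)⟩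

end OrderedField

/-- The matrix `Θ₁ := Θ̃ + α(1 − απ¹¹)⁻¹ M R` has nonnegative entries and
all its row sums are strictly less than 1. Here `N = n+1 > 1`, `Θ̃` is `Θ` with its
first row and column deleted, `M` is the first column of `Θ` with the first entry
deleted, and `R` is the first row of `Π` with the first entry deleted. -/
theorem stmt18 (n : ℕ) (hn : 1 ≤ n)
    (P Th : Matrix (Fin (n + 1)) (Fin (n + 1)) ℝ)
    (hP : ∀ i j, 0 ≤ P i j) (hProw : ∀ i, ∑ j, P i j ≤ 1)
    (hTh : ∀ i j, 0 ≤ Th i j) (hThrow : ∀ i, ∑ j, Th i j < 1)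
    (α : ℝ) (hα : α ∈ Set.Icc (0:ℝ) 1) (hα11 : α * P 0 0 < 1)
    (Th₁ : Matrix (Fin n) (Fin n) ℝ)
    (hTh₁ : Th₁ = fun i j =>
      Th i.succ j.succ + α * (1 - α * P 0 0)⁻¹ * (Th i.succ 0 * P 0 j.succ)) :
    (∀ i j, 0 ≤ Th₁ i j) ∧ (∀ i, ∑ j, Th₁ i j < 1) := by
  simp only [Fin.sum_univ_succ (n := n)] at hProw hThrow
  exact hTh₁ ▸ stmt18_general (A := Th.submatrix Fin.succ Fin.succ) (fun _ _ => hTh _ _)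
    (fun i => hTh i.succ 0) (fun _ => hP 0 _) (fun i => hThrow i.succ) hα.1 hα11
    ((mul_le_of_le_one_right hα.1 (hProw 0)).trans hα.2)
end

section
/- For every b ∈ {0,1}^N, the set {p ∈ [0,l] : p = F_b(p)} is a singleton {p_b}, and p_b satisfies p_bⁱ = lⁱ if bⁱ = 1 and p_bⁱ < lⁱ if bⁱ = 0. Consequently, the fixpoint sets of F_b for distinct b ∈ {0,1}^N are pairwise disjoint. -/
open Matrix

/-!
On `[0, l]` the indicator `d` vanishes because `Π'p ≥ 0`, and the minimum with `l` is never active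
because `α (l + Π'l) < l`. Hence `F_b` agrees there with an affine map `p ↦ c + A p`, where `A` is
`α Π'` with the rows `b i = 1` set to zero. The smallness assumption also gives `A l < l`, so
`A` obeys a maximum principle: evaluating at an index that maximizes `x i / l i` shows that
`x ≤ A x` forces `x ≤ 0`. The principle makes `1 - A` injective, hence bijective, and, applied to
`-p` and to `p - l`, it puts the solution `p` of `p = c + A p` into `[0, l]`.
-/

section MaximumPrinciple

theorem mulVec_le_mulVec_of_nonneg {m n R : Type*} [Fintype n] [Semiring R] [PartialOrder R]
    [IsOrderedRing R] {A : Matrix m n R} {x y : n → R} (hA : ∀ i j, 0 ≤ A i j) (hxy : x ≤ y) :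
    A *ᵥ x ≤ A *ᵥ y :=
  fun i => dotProduct_le_dotProduct_of_nonneg_left hxy (hA i)

variable {ι K : Type*} [Fintype ι] [Field K] [LinearOrder K] [IsStrictOrderedRing K]
  {A : Matrix ι ι K} {c l p x : ι → K}

theorem nonpos_of_le_mulVec (hA : ∀ i j, 0 ≤ A i j) (hl : ∀ i, 0 < l i)
    (hAl : ∀ i, (A *ᵥ l) i < l i) (hx : x ≤ A *ᵥ x) : x ≤ 0 := by
  intro j
  have : Nonempty ι := ⟨j⟩
  obtain ⟨i, hmax⟩ := Finite.exists_max fun k => x k / l k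
  by_contra! hj
  have hpos : 0 < x i / l i := (div_pos hj (hl j)).trans_le (hmax j)
  have hle : x ≤ (x i / l i) • l := fun k => (div_le_iff₀ (hl k)).1 (hmax k)
  have hlt : x i < x i := calc
    x i ≤ (A *ᵥ x) i := hx i
    _ ≤ (A *ᵥ ((x i / l i) • l)) i := mulVec_le_mulVec_of_nonneg hA hle i
    _ = x i / l i * (A *ᵥ l) i := by rw [mulVec_smul, Pi.smul_apply, smul_eq_mul]
    _ < x i / l i * l i := mul_lt_mul_of_pos_left (hAl i) hpos
    _ = x i := div_mul_cancel₀ _ (hl i).ne'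
  exact hlt.false

theorem eq_zero_of_eq_mulVec (hA : ∀ i j, 0 ≤ A i j) (hl : ∀ i, 0 < l i)
    (hAl : ∀ i, (A *ᵥ l) i < l i) (hx : x = A *ᵥ x) : x = 0 := by
  have hneg : -x ≤ A *ᵥ (-x) := by rw [mulVec_neg, ← hx]
  exact le_antisymm (nonpos_of_le_mulVec hA hl hAl hx.le)
    (neg_nonpos.1 (nonpos_of_le_mulVec hA hl hAl hneg))

theorem existsUnique_eq_add_mulVec (hA : ∀ i j, 0 ≤ A i j) (hl : ∀ i, 0 < l i)
    (hAl : ∀ i, (A *ᵥ l) i < l i) (c : ι → K) : ∃! p, p = c + A *ᵥ p := by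
  let T : (ι → K) →ₗ[K] (ι → K) := LinearMap.id - A.mulVecLin
  have hinj : Function.Injective T := (injective_iff_map_eq_zero T).2 fun _ hx =>
    eq_zero_of_eq_mulVec hA hl hAl (sub_eq_zero.1 hx)
  have hbij : Function.Bijective T := ⟨hinj, LinearMap.injective_iff_surjective.1 hinj⟩
  exact (existsUnique_congr fun _ => sub_eq_iff_eq_add).1 (hbij.existsUnique c)

theorem mem_Icc_of_eq_add_mulVec (hA : ∀ i j, 0 ≤ A i j) (hl : ∀ i, 0 < l i)
    (hAl : ∀ i, (A *ᵥ l) i < l i) (hc : 0 ≤ c) (hcl : c + A *ᵥ l ≤ l) (hp : p = c + A *ᵥ p) :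
    p ∈ Set.Icc 0 l := by
  have hlower : -p ≤ A *ᵥ (-p) := calc
    -p = -c + A *ᵥ (-p) := by rw [mulVec_neg, ← neg_add, ← hp]
    _ ≤ A *ᵥ (-p) := add_le_of_nonpos_left (neg_nonpos.2 hc)
  have hupper : p - l ≤ A *ᵥ (p - l) := calc
    p - l ≤ p - (c + A *ᵥ l) := sub_le_sub_left hcl p
    _ = (c + A *ᵥ p) - (c + A *ᵥ l) := by rw [← hp]
    _ = A *ᵥ (p - l) := by rw [add_sub_add_left_eq_sub, mulVec_sub]
  exact ⟨neg_nonpos.1 (nonpos_of_le_mulVec hA hl hAl hlower),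
    sub_nonpos.1 (nonpos_of_le_mulVec hA hl hAl hupper)⟩

end MaximumPrinciple

section Clearing

variable {ι R : Type*}

/-- The map `F_b`, with `P` for `Π`; `di` is the `i`-th component of `d`. -/
def clearingMap [Fintype ι] [Ring R] [LinearOrder R] (l : ι → R)
    (P : Matrix ι ι R) (α : R) (b : ι → Bool) (p : ι → R) : ι → R :=
  fun i =>
    let di : R := if l i + (Pᵀ *ᵥ p) i < l i then 1 else 0
    if b i then α * (l i + (Pᵀ *ᵥ p) i) * di + l i * (1 - di)
    else min (α * (l i + (Pᵀ *ᵥ p) i)) (l i)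

/-- The fixpoints of `F_b` in the order interval `[0, l]`. -/
def clearingVectors [Fintype ι] [Ring R] [LinearOrder R] (l : ι → R) (P : Matrix ι ι R) (α : R)
    (b : ι → Bool) : Set (ι → R) :=
  {p | p ∈ Set.Icc 0 l ∧ p = clearingMap l P α b p}

/-- The linear part of the affine map that agrees with `F_b` on `[0, l]`. -/
def clearingMatrix [Mul R] [Zero R] (P : Matrix ι ι R) (α : R) (b : ι → Bool) :
    Matrix ι ι R :=
  of fun i j => if b i then 0 else α * P j i

/-- The constant term of the affine map that agrees with `F_b` on `[0, l]`. -/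
def clearingConst [Mul R] (l : ι → R) (α : R) (b : ι → Bool) : ι → R :=
  fun i => if b i then l i else α * l i

theorem clearingMatrix_mulVec_apply [Fintype ι] [Semiring R] (P : Matrix ι ι R) (α : R)
    (b : ι → Bool) (p : ι → R) (i : ι) :
    (clearingMatrix P α b *ᵥ p) i = if b i then 0 else α * (Pᵀ *ᵥ p) i := by
  cases hb : b i <;> simp [clearingMatrix, mulVec, dotProduct, hb, Finset.mul_sum, mul_assoc]

theorem clearingConst_add_mulVec_apply [Fintype ι] [Semiring R] (l : ι → R) (P : Matrix ι ι R)
    (α : R) (b : ι → Bool) (p : ι → R) (i : ι) :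
    (clearingConst l α b + clearingMatrix P α b *ᵥ p) i =
      if b i then l i else α * (l i + (Pᵀ *ᵥ p) i) := by
  rw [Pi.add_apply, clearingMatrix_mulVec_apply, clearingConst]
  split_ifs
  · exact add_zero _
  · exact (mul_add _ _ _).symm

theorem clearingConst_add_mulVec_le [Fintype ι] [Semiring R] [Preorder R] {l : ι → R}
    {P : Matrix ι ι R} {α : R} {b : ι → Bool}
    (hsmall : ∀ i, α * (l i + (Pᵀ *ᵥ l) i) ≤ l i) :
    clearingConst l α b + clearingMatrix P α b *ᵥ l ≤ l := by
  intro i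
  rw [clearingConst_add_mulVec_apply]
  split_ifs
  exacts [le_rfl, hsmall i]

variable [Ring R] [LinearOrder R] [IsOrderedRing R] {l p q : ι → R} {P : Matrix ι ι R} {α : R}
  {b : ι → Bool}

theorem clearingMatrix_nonneg (hP : ∀ i j, 0 ≤ P i j) (hα : 0 ≤ α) (i j : ι) :
    0 ≤ clearingMatrix P α b i j :=
  ite_nonneg le_rfl (mul_nonneg hα (hP j i))

theorem clearingConst_nonneg (hl : 0 ≤ l) (hα : 0 ≤ α) : 0 ≤ clearingConst l α b :=
  fun i => ite_nonneg (hl i) (mul_nonneg hα (hl i))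

variable [Fintype ι]

theorem clearingMatrix_mulVec_lt (hl : ∀ i, 0 < l i) (hα : 0 ≤ α)
    (hsmall : ∀ i, α * (l i + (Pᵀ *ᵥ l) i) < l i) (i : ι) :
    (clearingMatrix P α b *ᵥ l) i < l i := by
  rw [clearingMatrix_mulVec_apply]
  split_ifs
  · exact hl i
  · exact (mul_le_mul_of_nonneg_left (le_add_of_nonneg_left (hl i).le) hα).trans_lt (hsmall i)

theorem mul_add_mulVec_le_mul_add_mulVec (hP : ∀ i j, 0 ≤ P i j) (hα : 0 ≤ α) (hpq : p ≤ q)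
    (i : ι) : α * (l i + (Pᵀ *ᵥ p) i) ≤ α * (l i + (Pᵀ *ᵥ q) i) :=
  mul_le_mul_of_nonneg_left
    (add_le_add_right (mulVec_le_mulVec_of_nonneg (fun j k => hP k j) hpq i) (l i)) hα

theorem clearingMap_eq_of_mem_Icc (hP : ∀ i j, 0 ≤ P i j) (hα : 0 ≤ α)
    (hsmall : ∀ i, α * (l i + (Pᵀ *ᵥ l) i) ≤ l i) (hp : p ∈ Set.Icc 0 l) :
    clearingMap l P α b p = clearingConst l α b + clearingMatrix P α b *ᵥ p := by
  funext i
  have hnonneg : 0 ≤ (Pᵀ *ᵥ p) i := dotProduct_nonneg_of_nonneg (fun j => hP j i) hp.1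
  have hsolvent : ¬ l i + (Pᵀ *ᵥ p) i < l i := (le_add_of_nonneg_right hnonneg).not_gt
  have hmin : min (α * (l i + (Pᵀ *ᵥ p) i)) (l i) = α * (l i + (Pᵀ *ᵥ p) i) :=
    min_eq_left ((mul_add_mulVec_le_mul_add_mulVec hP hα hp.2 i).trans (hsmall i))
  rw [clearingConst_add_mulVec_apply]
  simp only [clearingMap, if_neg hsolvent, hmin, mul_zero, sub_zero, mul_one, zero_add]

theorem apply_eq_of_mem_clearingVectors (hP : ∀ i j, 0 ≤ P i j) (hα : 0 ≤ α)
    (hsmall : ∀ i, α * (l i + (Pᵀ *ᵥ l) i) ≤ l i) (hp : p ∈ clearingVectors l P α b) (i : ι) :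
    p i = if b i then l i else α * (l i + (Pᵀ *ᵥ p) i) := by
  rw [← clearingConst_add_mulVec_apply, ← clearingMap_eq_of_mem_Icc hP hα hsmall hp.1, ← hp.2]

theorem apply_lt_iff_of_mem_clearingVectors (hP : ∀ i j, 0 ≤ P i j) (hα : 0 ≤ α)
    (hsmall : ∀ i, α * (l i + (Pᵀ *ᵥ l) i) < l i) (hp : p ∈ clearingVectors l P α b) (i : ι) :
    p i < l i ↔ b i = false := by
  have hpi := apply_eq_of_mem_clearingVectors hP hα (fun i => (hsmall i).le) hp i
  cases hb : b i
  · have hlt : p i < l i := by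
      rw [hpi, if_neg (Bool.eq_false_iff.1 hb)]
      exact (mul_add_mulVec_le_mul_add_mulVec hP hα hp.1.2 i).trans_lt (hsmall i)
    simpa using hlt
  · simp [hpi, hb]

theorem pairwise_disjoint_clearingVectors (hP : ∀ i j, 0 ≤ P i j) (hα : 0 ≤ α)
    (hsmall : ∀ i, α * (l i + (Pᵀ *ᵥ l) i) < l i) :
    Pairwise (Function.onFun Disjoint (clearingVectors l P α)) := by
  refine fun b b' hne => Set.disjoint_left.2 fun p hp hp' => hne (funext fun i => ?_)
  rw [Bool.eq_iff_iff, ← not_iff_not, Bool.not_eq_true, Bool.not_eq_true,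
    ← apply_lt_iff_of_mem_clearingVectors hP hα hsmall hp,
    ← apply_lt_iff_of_mem_clearingVectors hP hα hsmall hp']

end Clearing

section ExistsUnique

variable {ι K : Type*} [Fintype ι] [Field K] [LinearOrder K] [IsStrictOrderedRing K]
  {l p : ι → K} {P : Matrix ι ι K} {α : K} {b : ι → Bool}

theorem mem_clearingVectors_iff (hl : ∀ i, 0 < l i) (hP : ∀ i j, 0 ≤ P i j) (hα : 0 ≤ α)
    (hsmall : ∀ i, α * (l i + (Pᵀ *ᵥ l) i) < l i) :
    p ∈ clearingVectors l P α b ↔ p = clearingConst l α b + clearingMatrix P α b *ᵥ p := by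
  have hsmall_le (i : ι) : α * (l i + (Pᵀ *ᵥ l) i) ≤ l i := (hsmall i).le
  have haffine (h : p ∈ Set.Icc 0 l) := clearingMap_eq_of_mem_Icc (b := b) hP hα hsmall_le h
  refine ⟨fun ⟨hp, hfix⟩ => hfix.trans (haffine hp), fun hfix => ?_⟩
  have hp : p ∈ Set.Icc 0 l :=
    mem_Icc_of_eq_add_mulVec (clearingMatrix_nonneg hP hα) hl
      (clearingMatrix_mulVec_lt hl hα hsmall) (clearingConst_nonneg (fun i => (hl i).le) hα)
      (clearingConst_add_mulVec_le hsmall_le) hfix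
  exact ⟨hp, hfix.trans (haffine hp).symm⟩

theorem existsUnique_mem_clearingVectors (hl : ∀ i, 0 < l i) (hP : ∀ i j, 0 ≤ P i j)
    (hα : 0 ≤ α) (hsmall : ∀ i, α * (l i + (Pᵀ *ᵥ l) i) < l i) (b : ι → Bool) :
    ∃! p, p ∈ clearingVectors l P α b :=
  (existsUnique_congr fun _ => mem_clearingVectors_iff hl hP hα hsmall).2 <|
    existsUnique_eq_add_mulVec (clearingMatrix_nonneg hP hα) hl
      (clearingMatrix_mulVec_lt hl hα hsmall) _

theorem stmt19_general (hl : ∀ i, 0 < l i) (hP : ∀ i j, 0 ≤ P i j) (hα : 0 ≤ α)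
    (hsmall : ∀ i, α * (l i + (Pᵀ *ᵥ l) i) < l i) :
    (∀ b, ∃ pb, clearingVectors l P α b = {pb} ∧
      ∀ i, (b i = true → pb i = l i) ∧ (b i = false → pb i < l i)) ∧
    ∀ b b', b ≠ b' → clearingVectors l P α b ∩ clearingVectors l P α b' = ∅ := by
  refine ⟨fun b => ?_, fun b b' hne =>
    (pairwise_disjoint_clearingVectors hP hα hsmall hne).inter_eq⟩
  obtain ⟨p, hp, huniq⟩ := existsUnique_mem_clearingVectors hl hP hα hsmall b
  refine ⟨p, Set.eq_singleton_iff_unique_mem.2 ⟨hp, huniq⟩, fun i => ⟨fun hb => ?_, fun hb => ?_⟩⟩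
  · simpa [hb] using apply_eq_of_mem_clearingVectors hP hα (fun i => (hsmall i).le) hp i
  · exact (apply_lt_iff_of_mem_clearingVectors hP hα hsmall hp i).2 hb

end ExistsUnique

/-- In the model with `Θ = 0`, `e = l`, `β = α`, where `lⁱ > 0` and
`α(l + Π'l)ⁱ < lⁱ` for all `i`: for every `b ∈ {0,1}^N` the set of fixpoints
`{p ∈ [0,l] : p = F_b(p)}` is a singleton `{p_b}`, and `p_b` satisfies `p_bⁱ = lⁱ`
if `bⁱ = 1` and `p_bⁱ < lⁱ` if `bⁱ = 0`. Consequently, the fixpoint sets of `F_b`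
for distinct `b` are pairwise disjoint. -/
theorem stmt19 (N : ℕ) (hN : 1 < N)
    (l : Fin N → ℝ) (hl : ∀ i, 0 < l i)
    (P : Matrix (Fin N) (Fin N) ℝ)
    (hP : ∀ i j, 0 ≤ P i j) (hProw : ∀ i, ∑ j, P i j = 1)
    (α : ℝ) (hα : α ∈ Set.Icc (0:ℝ) 1)
    (hsmall : ∀ i, α * (l i + P.transpose.mulVec l i) < l i)
    (F : (Fin N → Bool) → (Fin N → ℝ) → Fin N → ℝ)
    (hF : F = fun b p i =>
      let di : ℝ := if l i + P.transpose.mulVec p i < l i then 1 else 0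
      if b i then α * (l i + P.transpose.mulVec p i) * di + l i * (1 - di)
      else min (α * (l i + P.transpose.mulVec p i)) (l i)) :
    (∀ b : Fin N → Bool, ∃ pb : Fin N → ℝ,
      {p : Fin N → ℝ | p ∈ Set.Icc (0 : Fin N → ℝ) l ∧ p = F b p} = {pb} ∧
      ∀ i, (b i = true → pb i = l i) ∧ (b i = false → pb i < l i)) ∧
    (∀ b b' : Fin N → Bool, b ≠ b' →
      {p : Fin N → ℝ | p ∈ Set.Icc (0 : Fin N → ℝ) l ∧ p = F b p} ∩
        {p : Fin N → ℝ | p ∈ Set.Icc (0 : Fin N → ℝ) l ∧ p = F b' p} = ∅) := by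
  subst hF
  exact stmt19_general hl hP hα.1 hsmall
end
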